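/- A basic element $b \in GL_n(L)$ is superbasic if and only if the valuation of $\det(b)$ is relatively prime to $n$. -/

import Mathlib

open Matrix

variable (K : Type*) [Field K]

/-- The standard representative of the basic `σ`-conjugacy class of slope `d/n` in
`GL_n(L)`, `L = K((ε))`: the matrix sending `e_j ↦ e_{j+1}` cyclically, with the wrap-around
entry equal to `ε^d`. -/
noncomputable def basicRep (n : ℕ) [NeZero n] (d : ℤ) :
    Matrix (Fin n) (Fin n) (LaurentSeries K) := fun i j =>
  if i = j + 1 then
    (if (j : ℕ) = n - 1 then HahnSeries.single d (1 : K) else 1)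
  else 0

theorem exists_submatrix_det_ne_zero {R ι r : Type*} [Field R] [Fintype ι] [Fintype r]
    [DecidableEq r] (Y : Matrix r ι R) (X : Matrix ι r R) (h : Y * X = 1) :
    ∃ f : r → ι, (X.submatrix f id).det ≠ 0 := by
  classical
  by_contra! H
  have h1 : (Y * X).det = ∑ f : r → ι, (∏ i, Y i (f i)) * (X.submatrix f id).det := by
    have : Y * X = fun i => ∑ j, Y i j • X j := by
      ext i j
      simp [Matrix.mul_apply]
    rw [this]
    change detRowAlternating.toMultilinearMap _ = _
    rw [MultilinearMap.map_sum]
    refine Finset.sum_congr rfl fun f _ => ?_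
    rw [MultilinearMap.map_smul_univ]
    rfl
  rw [h, det_one] at h1
  simp [H] at h1

theorem exists_pow_eq_self_and_trace_eq_one {k : Type*} [Field k] [IsAlgClosed k] (p q m : ℕ)
    (hp : p.Prime) (hq : q = p ^ m) (hm : 1 ≤ m) [CharP k p] (s c : ℕ) (hs : 0 < s) (hc : 0 < c) :
    ∃ u : k, u ^ q ^ (s * c) = u ∧ ∑ l ∈ Finset.range c, u ^ q ^ (s * l) = 1 := by
  have := Fact.mk hp
  have hq1 : 1 < q := hq ▸ Nat.one_lt_pow (by omega) hp.one_lt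
  have hqs : 1 < q ^ (s * c) := Nat.one_lt_pow (by positivity) hq1
  open Polynomial in
  obtain ⟨a, ha, ht⟩ : ∃ a : k, a ^ q ^ (s * c) = a ∧
      ∑ l ∈ Finset.range c, a ^ q ^ (s * l) ≠ 0 := by
    by_contra! H
    set P : k[X] := ∑ l ∈ Finset.range c, X ^ q ^ (s * l) with hP
    have hP0 : P ≠ 0 := by
      intro h
      have h1 : P.coeff 1 = 1 := by
        rw [hP, finsetSum_coeff, Finset.sum_eq_single_of_mem 0 (by simpa using hc)]
        · simp
        · intro l _ hl
          rw [coeff_X_pow, if_neg]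
          exact (Nat.one_lt_pow (by positivity) hq1).ne
      simp [h] at h1
    have hdeg : P.natDegree < q ^ (s * c) := by
      refine lt_of_le_of_lt (natDegree_sum_le_of_forall_le (n := q ^ (s * (c - 1))) _ _ ?_) ?_
      · intro l hl
        rw [natDegree_X_pow]
        have := Finset.mem_range.1 hl
        exact Nat.pow_le_pow_right (by omega) (Nat.mul_le_mul_left _ (by omega))
      · exact Nat.pow_lt_pow_right hq1 (Nat.mul_lt_mul_of_pos_left (by omega) hs)
    set Q : k[X] := X ^ q ^ (s * c) - X
    have hQdeg : Q.natDegree = q ^ (s * c) := FiniteField.X_pow_card_sub_X_natDegree_eq k hqs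
    have hQsep : Q.Separable := by
      apply galois_poly_separable p
      rw [hq, ← pow_mul]
      exact dvd_pow_self _ (by positivity)
    have hQcard : Fintype.card (Q.rootSet k) = Q.natDegree :=
      card_rootSet_eq_natDegree hQsep (by simpa using IsAlgClosed.splits Q)
    have hsub : Q.rootSet k ⊆ P.rootSet k := by
      intro x hx
      rw [mem_rootSet] at hx ⊢
      refine ⟨hP0, ?_⟩
      have := H x (by simpa [Q, sub_eq_zero] using hx.2)
      simpa [hP] using this
    have h1 : (Q.rootSet k).ncard ≤ (P.rootSet k).ncard :=
      Set.ncard_le_ncard hsub (rootSet_finite _ _)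
    have h2 := ncard_rootSet_le P k
    rw [← Nat.card_coe_set_eq, Nat.card_eq_fintype_card, hQcard] at h1
    omega
  set t := ∑ l ∈ Finset.range c, a ^ q ^ (s * l) with ht'
  have hts : t ^ q ^ s = t := by
    have h1 : t ^ q ^ s = ∑ l ∈ Finset.range c, a ^ q ^ (s * (l + 1)) := by
      rw [ht', hq, ← pow_mul, sum_pow_char_pow]
      refine Finset.sum_congr rfl fun l _ => ?_
      rw [← pow_mul, ← pow_mul, ← pow_mul, ← pow_add]
      congr 2; ring
    have h2 := Finset.sum_range_succ (fun l => a ^ q ^ (s * l)) c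
    rw [Finset.sum_range_succ'] at h2
    simp only [ha, mul_zero, pow_zero, pow_one] at h2
    rw [h1, add_right_cancel h2]
  have htl : ∀ l, t ^ q ^ (s * l) = t := by
    intro l
    induction l with
    | zero => simp
    | succ l ih => rw [mul_add, mul_one, pow_add, pow_mul, ih, hts]
  refine ⟨a / t, by rw [div_pow, ha, htl], ?_⟩
  simp only [div_pow, htl]
  rw [← Finset.sum_div, div_self ht]

/-- An idempotent matrix is diagonalizable. -/
theorem exists_diagonalization_of_isIdempotentElem {R : Type*} [Field R] {n : ℕ}
    (E : Matrix (Fin n) (Fin n) R) (hE : IsIdempotentElem E) (h0 : E ≠ 0) (h1 : E ≠ 1) :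
    ∃ (g : GL (Fin n) R) (S : Finset (Fin n)), S.Nonempty ∧ S ≠ Finset.univ ∧
      E * (g : Matrix (Fin n) (Fin n) R) =
        g * diagonal (fun i => if i ∈ S then (1 : R) else 0) := by
  classical
  have hφi : IsIdempotentElem (Matrix.toLin' E) := by
    rw [IsIdempotentElem, Module.End.mul_eq_comp, ← Matrix.toLin'_mul, hE.eq]
  have hc := LinearMap.IsIdempotentElem.isCompl hφi
  let v := ((Module.finBasis R _).prod (Module.finBasis R _)).map
    (Submodule.prodEquivOfIsCompl _ _ hc)
  let w := v.reindex (v.indexEquiv (Pi.basisFun R (Fin n)))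
  have hw : ∀ i, E *ᵥ w i = w i ∨ E *ᵥ w i = 0 := by
    intro i
    obtain ⟨j, rfl⟩ := (v.indexEquiv (Pi.basisFun R (Fin n))).surjective i
    simp only [w, Module.Basis.reindex_apply, Equiv.symm_apply_apply, v, Module.Basis.map_apply]
    rcases j with j | j
    · left
      simpa using (LinearMap.IsIdempotentElem.mem_range_iff hφi).1
        (Module.finBasis R (LinearMap.range (Matrix.toLin' E)) j).2
    · right
      have := LinearMap.mem_ker.1 (Module.finBasis R (LinearMap.ker (Matrix.toLin' E)) j).2
      simpa only [Matrix.toLin'_apply, Module.Basis.prod_apply, Sum.elim_inr, Function.comp_apply,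
        LinearMap.coe_inr, Submodule.coe_prodEquivOfIsCompl', ZeroMemClass.coe_zero,
        zero_add] using this
  let S : Finset (Fin n) := {i | E *ᵥ w i = w i}
  have hunit : IsUnit ((Pi.basisFun R (Fin n)).toMatrix w) :=
    letI := (Pi.basisFun R (Fin n)).invertibleToMatrix w
    isUnit_of_invertible _
  obtain ⟨g, hg⟩ := hunit
  have hEg : E * (g : Matrix (Fin n) (Fin n) R) =
      g * diagonal (fun i => if i ∈ S then (1 : R) else 0) := by
    ext i j
    have : (E * (g : Matrix (Fin n) (Fin n) R)) i j = (E *ᵥ w j) i := by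
      simp [hg, Matrix.mul_apply, Matrix.mulVec, dotProduct, Module.Basis.toMatrix_apply]
    rw [this, mul_diagonal, hg, Module.Basis.toMatrix_apply, Pi.basisFun_repr]
    by_cases hj : E *ᵥ w j = w j
    · simp [S, hj]
    · rw [(hw j).resolve_left hj]
      simp [S, hj]
  refine ⟨g, S, ?_, ?_, hEg⟩
  · rw [Finset.nonempty_iff_ne_empty]
    rintro hS
    apply h0
    rw [hS] at hEg
    have : E * g.1 * g⁻¹.1 = 0 := by rw [hEg]; simp
    simpa [mul_assoc] using this
  · rintro hS
    apply h1
    rw [hS] at hEg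
    have : E * g.1 * g⁻¹.1 = 1 := by rw [hEg]; simp
    simpa [mul_assoc] using this

section LaurentFrobenius

variable {k : Type*} [Field k] {q : ℕ} {σ : LaurentSeries k →+* LaurentSeries k}

theorem order_map_of_coeff_map (hq : 0 < q)
    (hσ : ∀ (x : LaurentSeries k) (i : ℤ), (σ x).coeff i = (x.coeff i) ^ q) (x : LaurentSeries k) :
    (σ x).order = x.order := by
  by_cases hx : x = 0
  · simp [hx]
  have hsx : σ x ≠ 0 := by simpa using hx
  apply le_antisymm <;> apply HahnSeries.order_le_of_coeff_ne_zero
  · rw [hσ]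
    exact pow_ne_zero _ (HahnSeries.coeff_order_eq_zero.not.2 hx)
  · have := HahnSeries.coeff_order_eq_zero.not.2 hsx
    rw [hσ] at this
    exact ne_zero_pow hq.ne' this

theorem map_single_of_coeff_map (hq : 0 < q)
    (hσ : ∀ (x : LaurentSeries k) (i : ℤ), (σ x).coeff i = (x.coeff i) ^ q) (i : ℤ) (a : k) :
    σ (HahnSeries.single i a) = HahnSeries.single i (a ^ q) := by
  ext j
  rw [hσ, HahnSeries.coeff_single, HahnSeries.coeff_single]
  split_ifs
  · rfl
  · exact zero_pow hq.ne'

theorem order_pow_laurent (x : LaurentSeries k) (j : ℕ) : (x ^ j).order = j * x.order := by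
  rw [HahnSeries.order_pow]; simp

theorem basicRep_map (hq : 0 < q)
    (hσ : ∀ (x : LaurentSeries k) (i : ℤ), (σ x).coeff i = (x.coeff i) ^ q) (n : ℕ) [NeZero n]
    (d : ℤ) : (basicRep k n d).map σ = basicRep k n d := by
  ext1 i j
  simp only [Matrix.map_apply, basicRep]
  split_ifs
  · rw [map_single_of_coeff_map hq hσ, one_pow]
  · exact map_one σ
  · exact map_zero σ

theorem ofNat_add_one (n : ℕ) [NeZero n] (l : ℕ) : Fin.ofNat n l + 1 = Fin.ofNat n (l + 1) := by
  ext
  simp [Fin.val_add]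

theorem basicRep_mulVec (n : ℕ) [NeZero n] (d : ℤ) (l : ℕ) :
    basicRep k n d *ᵥ Pi.single (Fin.ofNat n l) (HahnSeries.single (d * (l / n : ℕ)) 1) =
      Pi.single (Fin.ofNat n (l + 1)) (HahnSeries.single (d * ((l + 1) / n : ℕ)) 1) := by
  have hn := NeZero.pos n
  have hlt := Nat.mod_lt l hn
  have hdiv : (l + 1) / n = l / n + if l % n = n - 1 then 1 else 0 := by
    rw [Nat.succ_div]
    congr 2
    rw [← Nat.div_add_mod l n, add_assoc, Nat.dvd_add_right (dvd_mul_right _ _),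
      Nat.mul_add_mod, Nat.mod_mod]
    refine propext ⟨fun h => ?_, fun h => ?_⟩
    · have := Nat.le_of_dvd (by omega) h
      omega
    · rw [h, Nat.sub_add_cancel hn]
  ext1 i
  rw [mulVec_single, ← ofNat_add_one, Pi.smul_apply, col_apply, basicRep, Pi.single_apply, hdiv]
  simp only [Fin.val_ofNat]
  split_ifs <;> simp [mul_add, add_comm]

theorem basicRep_pow_mulVec (n : ℕ) [NeZero n] (d : ℤ) (j l : ℕ) :
    basicRep k n d ^ j *ᵥ Pi.single (Fin.ofNat n l) (HahnSeries.single (d * (l / n : ℕ)) 1) =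
      Pi.single (Fin.ofNat n (l + j)) (HahnSeries.single (d * ((l + j) / n : ℕ)) 1) := by
  induction j generalizing l with
  | zero => rw [pow_zero, one_mulVec, add_zero]
  | succ j ih => rw [pow_succ, ← mulVec_mulVec, basicRep_mulVec, ih, add_assoc, add_comm 1]

theorem basicRep_pow_self (n : ℕ) [NeZero n] (d : ℤ) :
    basicRep k n d ^ n = (HahnSeries.single d (1 : k) : LaurentSeries k) • 1 := by
  ext1 i j
  have h := congrFun (basicRep_pow_mulVec (k := k) n d n j) i
  have hj : Fin.ofNat n (j : ℕ) = j := by ext; simp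
  have hj' : Fin.ofNat n ((j : ℕ) + n) = j := by ext; simp [Nat.mod_eq_of_lt j.2]
  rw [hj, hj', Nat.div_eq_of_lt j.2, Nat.add_div_right _ (NeZero.pos n),
    Nat.div_eq_of_lt j.2] at h
  simpa [Pi.single_apply, Matrix.one_apply] using h

/-- If the columns of `X` span a subspace stable under `basicRep k n d ∘ σ`, and `H` is the
matrix of the restriction, then `H` has slope `d / n`. -/
theorem order_det_mul_of_mul_eq_basicRep_mul (hq : 0 < q)
    (hσ : ∀ (x : LaurentSeries k) (i : ℤ), (σ x).coeff i = (x.coeff i) ^ q) {n : ℕ} [NeZero n]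
    (d : ℤ) {r : Type*} [Fintype r] [DecidableEq r] (X : Matrix (Fin n) r (LaurentSeries k))
    (Y : Matrix r (Fin n) (LaurentSeries k)) (hYX : Y * X = 1)
    (H : Matrix r r (LaurentSeries k)) (hX : X * H = basicRep k n d * X.map σ) :
    n * H.det.order = Fintype.card r * d := by
  have hB := basicRep_map hq hσ n d
  have iter : ∀ j : ℕ, ∃ P : Matrix r r (LaurentSeries k),
      X * P = basicRep k n d ^ j * X.map (σ^[j]) ∧ (H.det ≠ 0 → P.det ≠ 0) ∧
      (H.det = 0 → 0 < j → P.det = 0) ∧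
      (H.det ≠ 0 → P.det.order = j * H.det.order) := by
    intro j
    induction j with
    | zero => exact ⟨1, by simp⟩
    | succ j ih =>
      obtain ⟨P, hP, hP0, -, hPo⟩ := ih
      have hdet : (P.map σ).det = σ P.det := (RingHom.map_det σ P).symm
      refine ⟨H * P.map σ, ?_, ?_, ?_, ?_⟩
      · have h2 := congrArg (fun M => M.map σ) hP
        have h3 : ∀ j : ℕ, (basicRep k n d ^ j).map σ = basicRep k n d ^ j := by
          intro j
          have := map_pow σ.mapMatrix (basicRep k n d) j
          simpa [RingHom.mapMatrix_apply, hB] using this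
        simp only [Matrix.map_mul, h3] at h2
        rw [← Matrix.mul_assoc, hX, Matrix.mul_assoc, h2, ← Matrix.mul_assoc, ← pow_succ',
          Matrix.map_map, ← Function.iterate_succ']
      · intro h
        rw [det_mul, hdet]
        exact mul_ne_zero h (by simpa using hP0 h)
      · intro h _
        rw [det_mul, h, zero_mul]
      · intro h
        rw [det_mul, hdet, HahnSeries.order_mul h (by simpa using hP0 h),
          order_map_of_coeff_map hq hσ, hPo h]
        push_cast; ring
  obtain ⟨P, hP, -, hPz, hPo⟩ := iter n
  obtain ⟨f, hf⟩ := exists_submatrix_det_ne_zero Y X hYX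
  have horder : ∀ (j : ℕ) (x : LaurentSeries k), (σ^[j] x).order = x.order := by
    intro j x
    induction j with
    | zero => rfl
    | succ j ih => rw [Function.iterate_succ_apply', order_map_of_coeff_map hq hσ, ih]
  rw [basicRep_pow_self, Matrix.smul_mul, Matrix.one_mul] at hP
  have hdetσ : ((X.submatrix f id).map (σ^[n])).det = σ^[n] (X.submatrix f id).det := by
    have := RingHom.map_det (σ ^ n) (X.submatrix f id)
    simpa [RingHom.mapMatrix_apply, RingHom.coe_pow] using this.symm
  have hdetσ0 : σ^[n] (X.submatrix f id).det ≠ 0 := by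
    rw [← RingHom.coe_pow]
    exact (map_ne_zero (σ ^ n)).2 hf
  have hsub : X.submatrix f id * P = (HahnSeries.single d (1 : k) : LaurentSeries k) •
      (X.submatrix f id).map (σ^[n]) := by
    ext1 i j
    exact congrFun (congrFun hP (f i)) j
  have hdet := congrArg Matrix.det hsub
  have hs : (HahnSeries.single d (1 : k) : LaurentSeries k) ≠ 0 := by simp
  rw [det_mul, det_smul, hdetσ] at hdet
  have hPd : P.det ≠ 0 := by
    intro h
    rw [h, mul_zero] at hdet
    exact mul_ne_zero (pow_ne_zero _ hs) hdetσ0 hdet.symm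
  have hH : H.det ≠ 0 := fun h => hPd (hPz h (NeZero.pos n))
  have ho := congrArg HahnSeries.order hdet
  rw [HahnSeries.order_mul hf hPd, HahnSeries.order_mul (pow_ne_zero _ hs) hdetσ0, horder,
    order_pow_laurent, HahnSeries.order_single one_ne_zero, hPo hH] at ho
  linarith

/-- The entries, indexed by all natural numbers, of an idempotent matrix projecting onto the
span of the `basicRep k n d ∘ σ`-orbit of `∑ l, u ^ q ^ (s * l) ε ^ (-l * δ) e_{s * l}`, where
`n = s * c` and `d = c * δ`. -/
noncomputable def orbitProj (q : ℕ) (u : k) (s : ℕ) (δ : ℤ) (i j : ℕ) : LaurentSeries k :=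
  if (s : ℤ) ∣ j - i then HahnSeries.single (((j : ℤ) - i) / s * δ) (u ^ q ^ i) else 0

theorem map_orbitProj (hq : 0 < q)
    (hσ : ∀ (x : LaurentSeries k) (i : ℤ), (σ x).coeff i = (x.coeff i) ^ q)
    (u : k) (s : ℕ) (δ : ℤ) (i j : ℕ) :
    σ (orbitProj q u s δ i j) = orbitProj q u s δ (i + 1) (j + 1) := by
  have h : ((j + 1 : ℕ) : ℤ) - (i + 1 : ℕ) = j - i := by push_cast; ring
  rw [orbitProj, orbitProj, h]
  split_ifs
  · rw [map_single_of_coeff_map hq hσ, ← pow_mul, ← pow_succ]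
  · exact map_zero σ

theorem orbitProj_add_right (u : k) {s : ℕ} (hs : 0 < s) (c : ℕ) (δ : ℤ) (i j : ℕ) :
    orbitProj q u s δ i (j + s * c) =
      HahnSeries.single (c * δ) (1 : k) * orbitProj q u s δ i j := by
  have h : ((j + s * c : ℕ) : ℤ) - i = (j - i) + s * c := by push_cast; ring
  have hs' : (s : ℤ) ≠ 0 := by exact_mod_cast hs.ne'
  simp only [orbitProj, h, dvd_add_left (dvd_mul_right (s : ℤ) c),
    Int.add_mul_ediv_left _ _ hs', mul_ite, mul_zero, HahnSeries.single_mul_single, one_mul]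
  congr 2
  ring_nf

theorem orbitProj_add_left {u : k} {s c : ℕ} (hs : 0 < s) (hu : u ^ q ^ (s * c) = u) (δ : ℤ)
    (i j : ℕ) :
    HahnSeries.single (c * δ) (1 : k) * orbitProj q u s δ (i + s * c) j =
      orbitProj q u s δ i j := by
  have h : (j : ℤ) - (i + s * c : ℕ) = (j - i) + s * (-c) := by push_cast; ring
  have hs' : (s : ℤ) ≠ 0 := by exact_mod_cast hs.ne'
  have hu' : u ^ q ^ (i + s * c) = u ^ q ^ i := by rw [add_comm, pow_add, pow_mul, hu]
  simp only [orbitProj, h, dvd_add_left (dvd_mul_right (s : ℤ) (-c)),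
    Int.add_mul_ediv_left _ _ hs', mul_ite, mul_zero, HahnSeries.single_mul_single, one_mul, hu']
  congr 2
  ring_nf

theorem orbitProj_mul_orbitProj (u : k) {s : ℕ} (hs : 0 < s) (δ : ℤ) (i l j : ℕ) :
    orbitProj q u s δ i l * orbitProj q u s δ l j =
      orbitProj q u s δ i j * HahnSeries.single 0 (if (s : ℤ) ∣ l - i then u ^ q ^ l else 0) := by
  have hs' : (s : ℤ) ≠ 0 := by exact_mod_cast hs.ne'
  by_cases h : (s : ℤ) ∣ l - i
  · have hsplit : (j : ℤ) - i = (l - i) + (j - l) := by ring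
    have h2 : (s : ℤ) ∣ j - l ↔ (s : ℤ) ∣ j - i := by
      rw [hsplit, dvd_add_right h]
    have h3 : ((j : ℤ) - i) / s = (l - i) / s + (j - l) / s := by
      rw [hsplit, Int.add_ediv_of_dvd_left h]
    simp only [orbitProj, h, h2, if_true, h3]
    split_ifs
    · simp only [HahnSeries.single_mul_single, add_zero, add_mul]
    · simp
  · simp [orbitProj, h]

theorem sum_filter_pow_eq_one (p m : ℕ) [Fact p.Prime] [CharP k p] (hq : q = p ^ m) {u : k}
    {s c : ℕ} (hs : 0 < s) (hu : ∑ l ∈ Finset.range c, u ^ q ^ (s * l) = 1) (i : ℕ) :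
    ∑ l ∈ Finset.range (s * c), (if (s : ℤ) ∣ l - i then u ^ q ^ l else 0) = 1 := by
  rw [← Finset.sum_filter]
  calc _ = ∑ a ∈ Finset.range c, u ^ q ^ (s * a + i % s) := by
        have hi := Nat.mod_lt i hs
        have hiff : ∀ l : ℕ, (s : ℤ) ∣ l - i ↔ l % s = i % s := fun l => by
          rw [← Nat.modEq_iff_dvd]; exact eq_comm
        symm
        refine Finset.sum_nbij' (fun a => s * a + i % s) (fun l => l / s) ?_ ?_ ?_ ?_ ?_
        · intro a ha
          have ha := Finset.mem_range.1 ha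
          simp only [Finset.mem_filter, Finset.mem_range, hiff]
          refine ⟨?_, by simp⟩
          calc s * a + i % s < s * (a + 1) := by rw [mul_add]; omega
            _ ≤ s * c := Nat.mul_le_mul_left _ ha
        · intro l hl
          have hl := (Finset.mem_filter.1 hl).1
          rw [Finset.mem_range] at hl ⊢
          exact Nat.div_lt_of_lt_mul hl
        · intro a _
          simp [Nat.mul_add_div hs, Nat.div_eq_of_lt hi]
        · intro l hl
          have hl := (hiff l).1 (Finset.mem_filter.1 hl).2
          simp only [← hl, Nat.div_add_mod]
        · intro a _
          rfl
    _ = (∑ a ∈ Finset.range c, u ^ q ^ (s * a)) ^ q ^ (i % s) := by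
        have h := sum_pow_char_pow p (m * (i % s)) (Finset.range c) fun a => u ^ q ^ (s * a)
        rw [pow_mul p, ← hq] at h
        rw [h]
        refine Finset.sum_congr rfl fun a _ => ?_
        rw [← pow_mul, ← pow_add]
    _ = 1 := by rw [hu, one_pow]

theorem isIdempotentElem_orbitProj (p m : ℕ) [Fact p.Prime] [CharP k p] (hq : q = p ^ m) {u : k}
    {s c n : ℕ} (hn : n = s * c) (hs : 0 < s)
    (hu : ∑ l ∈ Finset.range c, u ^ q ^ (s * l) = 1) (δ : ℤ) :
    IsIdempotentElem
      (Matrix.of fun i j : Fin n => orbitProj q u s δ i j) := by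
  ext1 i j
  simp only [Matrix.mul_apply, Matrix.of_apply, orbitProj_mul_orbitProj u hs]
  have hsum := sum_filter_pow_eq_one p m hq hs hu i
  rw [← hn, Finset.sum_range] at hsum
  have h := map_sum (HahnSeries.C : k →+* LaurentSeries k)
    (fun l : Fin n => if (s : ℤ) ∣ (l : ℕ) - (i : ℕ) then u ^ q ^ (l : ℕ) else 0) Finset.univ
  rw [hsum, map_one] at h
  rw [← Finset.mul_sum]
  exact (congrArg _ h.symm).trans (mul_one _)

theorem orbitProj_mul_basicRep (hq : 0 < q)
    (hσ : ∀ (x : LaurentSeries k) (i : ℤ), (σ x).coeff i = (x.coeff i) ^ q) {u : k}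
    {s c n : ℕ} [NeZero n] (hn : n = s * c) (hs : 0 < s) (hu : u ^ q ^ (s * c) = u) (δ : ℤ) :
    (Matrix.of fun i j : Fin n => orbitProj q u s δ i j) * basicRep k n (c * δ) =
      basicRep k n (c * δ) * (Matrix.of fun i j : Fin n => orbitProj q u s δ i j).map σ := by
  have hn0 := NeZero.pos n
  have hlast : ∀ i : Fin n, (i : ℕ) = n - 1 → (i + 1 : Fin n) = 0 ∧ (i : ℕ) + 1 = 0 + s * c := by
    intro i hi
    refine ⟨?_, by omega⟩
    ext
    simp [Fin.val_add, hi, Nat.sub_add_cancel (NeZero.one_le : 1 ≤ n)]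
  have hmid : ∀ i : Fin n, (i : ℕ) ≠ n - 1 → ((i + 1 : Fin n) : ℕ) = i + 1 := by
    intro i hi
    have := Nat.mod_eq_of_lt (show (i : ℕ) + 1 < n by omega)
    simpa [Fin.val_add] using this
  ext1 i j
  obtain ⟨i, rfl⟩ : ∃ i', i = i' + 1 := ⟨i - 1, by simp⟩
  rw [Matrix.mul_apply, Finset.sum_eq_single_of_mem (j + 1) (Finset.mem_univ _)
    (fun l _ hl => by simp [basicRep, hl]), Matrix.mul_apply,
    Finset.sum_eq_single_of_mem i (Finset.mem_univ _)
    (fun l _ hl => by simp [basicRep, hl.symm])]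
  simp only [Matrix.of_apply, Matrix.map_apply, map_orbitProj hq hσ, basicRep, if_true]
  have hright : orbitProj q u s δ (i + 1 : Fin n) (j + 1 : Fin n) *
      (if (j : ℕ) = n - 1 then HahnSeries.single (c * δ) (1 : k) else 1) =
      orbitProj q u s δ (i + 1 : Fin n) (j + 1) := by
    split_ifs with h
    · rw [(hlast j h).1, (hlast j h).2, orbitProj_add_right u hs, mul_comm, Fin.val_zero]
    · rw [hmid j h, mul_one]
  rw [hright]
  split_ifs with h
  · rw [(hlast i h).1, (hlast i h).2, orbitProj_add_left hs hu, Fin.val_zero]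
  · rw [hmid i h, one_mul]

/-- If `gcd(d, n) ≠ 1`, some `σ`-conjugate of `basicRep k n d` is block diagonal. -/
theorem exists_conj_basicRep_blockDiagonal [IsAlgClosed k] (p m : ℕ) (hp : p.Prime)
    (hqp : q = p ^ m) (hm : 1 ≤ m) [CharP k p]
    (hσ : ∀ (x : LaurentSeries k) (i : ℤ), (σ x).coeff i = (x.coeff i) ^ q) (n : ℕ) [NeZero n]
    (d : ℤ) (hd : Int.gcd d n ≠ 1) :
    ∃ (g : GL (Fin n) (LaurentSeries k)) (S : Finset (Fin n)), S.Nonempty ∧ S ≠ Finset.univ ∧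
      ∀ i j : Fin n, (i ∈ S ∧ j ∉ S) ∨ (j ∈ S ∧ i ∉ S) →
        ((g⁻¹).1 * basicRep k n d * g.1.map σ) i j = 0 := by
  have := Fact.mk hp
  have hq : 0 < q := hqp ▸ pow_pos hp.pos _
  have hn0 := NeZero.pos n
  obtain ⟨s, hn⟩ : Int.gcd d n ∣ n := by exact_mod_cast Int.gcd_dvd_right d n
  obtain ⟨δ, hδ⟩ : (Int.gcd d n : ℤ) ∣ d := Int.gcd_dvd_left d n
  generalize Int.gcd d n = c at hd hn hδ
  rw [mul_comm] at hn
  have hs : 0 < s := Nat.pos_of_ne_zero (by rintro rfl; omega)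
  have hc : 0 < c := Nat.pos_of_ne_zero (by rintro rfl; omega)
  obtain ⟨u, hu, hut⟩ := exists_pow_eq_self_and_trace_eq_one (k := k) p q m hp hqp hm s c hs hc
  have hu0 : u ≠ 0 := by
    rintro rfl
    simp [hq.ne'] at hut
  have hlt : s < n := by
    rw [hn]
    exact lt_mul_of_one_lt_right hs (by omega)
  obtain ⟨g, S, hS, hS', hg⟩ := exists_diagonalization_of_isIdempotentElem _
    (isIdempotentElem_orbitProj p m hqp hn hs hut δ)
    (fun h => by
      have := congrFun (congrFun h ⟨0, hn0⟩) ⟨0, hn0⟩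
      simp [orbitProj, hu0] at this)
    (fun h => by
      have := congrFun (congrFun h ⟨0, hn0⟩) ⟨s, hlt⟩
      simp [orbitProj, hu0, Matrix.one_apply, hs.ne'] at this)
  have hEB := orbitProj_mul_basicRep hq hσ hn hs hu δ
  rw [← hδ] at hEB
  set E : Matrix (Fin n) (Fin n) (LaurentSeries k) :=
    Matrix.of fun i j : Fin n => orbitProj q u s δ i j
  set D : Matrix (Fin n) (Fin n) (LaurentSeries k) :=
    diagonal (fun i => if i ∈ S then 1 else 0) with hD
  have hDσ : D.map σ = D := by
    ext1 i j
    simp only [hD, Matrix.map_apply, diagonal_apply]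
    split_ifs <;> simp
  have hgσ : E.map σ * g.1.map σ = g.1.map σ * D := by
    rw [← Matrix.map_mul, hg, Matrix.map_mul, hDσ]
  have hginv : (g⁻¹).1 * E = D * (g⁻¹).1 := by
    have h1 : (g⁻¹).1 * g.1 = 1 := by simp
    have h2 : g.1 * (g⁻¹).1 = 1 := by simp
    calc (g⁻¹).1 * E = (g⁻¹).1 * (E * g.1) * (g⁻¹).1 := by
          rw [mul_assoc, mul_assoc, h2, mul_one]
      _ = D * (g⁻¹).1 := by rw [hg, ← mul_assoc, h1, one_mul]
  have hcomm : D * ((g⁻¹).1 * basicRep k n d * g.1.map σ) =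
      ((g⁻¹).1 * basicRep k n d * g.1.map σ) * D := by
    rw [mul_assoc _ _ D, ← hgσ, mul_assoc, mul_assoc, ← mul_assoc _ (E.map σ), ← hEB,
      ← mul_assoc D, ← hginv, mul_assoc, mul_assoc]
  refine ⟨g, S, hS, hS', fun i j hij => ?_⟩
  have := congrFun (congrFun hcomm i) j
  rw [hD, diagonal_mul, mul_diagonal] at this
  rcases hij with ⟨hi, hj⟩ | ⟨hj, hi⟩
  · simpa [hi, hj] using this
  · simpa [hi, hj] using this.symm

/-- If some `σ`-conjugate of `basicRep k n d` is block diagonal with a block of size `#S`, then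
`n` divides `#S * d`. -/
theorem dvd_card_mul_of_conj_basicRep (hq : 0 < q)
    (hσ : ∀ (x : LaurentSeries k) (i : ℤ), (σ x).coeff i = (x.coeff i) ^ q) {n : ℕ} [NeZero n]
    (d : ℤ) (g : GL (Fin n) (LaurentSeries k)) (S : Finset (Fin n))
    (h : ∀ i j : Fin n, i ∉ S → j ∈ S → ((g⁻¹).1 * basicRep k n d * g.1.map σ) i j = 0) :
    (n : ℤ) ∣ S.card * d := by
  set M := (g⁻¹).1 * basicRep k n d * g.1.map σ with hM
  have hgM : g.1 * M = basicRep k n d * g.1.map σ := by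
    have h2 : g.1 * (g⁻¹).1 = 1 := by simp
    rw [hM, ← mul_assoc, ← mul_assoc, h2, one_mul]
  refine ⟨(M.submatrix (Subtype.val : S → Fin n) Subtype.val).det.order, ?_⟩
  rw [order_det_mul_of_mul_eq_basicRep_mul hq hσ d (g.1.submatrix id (Subtype.val : S → Fin n))
    ((g⁻¹).1.submatrix (Subtype.val : S → Fin n) id) ?_
    (M.submatrix (Subtype.val : S → Fin n) Subtype.val) ?_, Fintype.card_coe]
  · rw [← Matrix.submatrix_mul _ _ _ _ _ Function.bijective_id]
    have h1 : (g⁻¹).1 * g.1 = 1 := by simp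
    rw [h1, Matrix.submatrix_one _ Subtype.val_injective]
  · ext1 i j
    have := congrFun (congrFun hgM i) j
    simp only [Matrix.mul_apply, Matrix.submatrix_apply, Matrix.map_apply, id] at this ⊢
    rw [← this, ← Finset.sum_subset (Finset.subset_univ S)
      (fun l _ hl => by rw [h l j hl j.2, mul_zero])]
    exact Finset.sum_coe_sort S (fun l => g.1 i l * M l j)

end LaurentFrobenius

/-- Proposition 5.10 (key observation): a basic element `b ∈ GL_n(L)` is superbasic if and
only if the valuation of `det b` is relatively prime to `n`.  Here `σ` is the entrywise
Frobenius of `L = K((ε))` over `F = 𝔽_q((ε))`; `b` is basic iff it is `σ`-conjugate to the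
standard isoclinic representative of slope `val(det b)/n`; and `b` is superbasic iff no
`σ`-conjugate of `b` lies in a proper (standard, block-diagonal) Levi subgroup of `GL_n`
over `F`. -/
theorem basic_superbasic_iff_gcd_valuation_det
    (p q m : ℕ) (hp : p.Prime) (hq : q = p ^ m) (hm : 1 ≤ m)
    [IsAlgClosed K] [CharP K p]
    (σL : LaurentSeries K →+* LaurentSeries K)
    (hσL : ∀ (x : LaurentSeries K) (k : ℤ), (σL x).coeff k = (x.coeff k) ^ q)
    (n : ℕ) [NeZero n]
    (b : GL (Fin n) (LaurentSeries K))
    -- `b` is basic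
    (hb : ∃ g : GL (Fin n) (LaurentSeries K),
      ((g⁻¹ * b * Units.map (RingHom.mapMatrix σL).toMonoidHom g :
          GL (Fin n) (LaurentSeries K)) : Matrix (Fin n) (Fin n) (LaurentSeries K))
        = basicRep K n (((b : Matrix (Fin n) (Fin n) (LaurentSeries K)).det).order)) :
    -- superbasic ↔ gcd(val(det b), n) = 1
    (¬ ∃ (g : GL (Fin n) (LaurentSeries K)) (S : Finset (Fin n)),
        S.Nonempty ∧ S ≠ Finset.univ ∧
        ∀ i j : Fin n, (i ∈ S ∧ j ∉ S) ∨ (j ∈ S ∧ i ∉ S) →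
          ((g⁻¹ * b * Units.map (RingHom.mapMatrix σL).toMonoidHom g :
              GL (Fin n) (LaurentSeries K)) :
            Matrix (Fin n) (Fin n) (LaurentSeries K)) i j = 0) ↔
    Int.gcd (((b : Matrix (Fin n) (Fin n) (LaurentSeries K)).det).order) (n : ℤ) = 1 := by
  have hq0 : 0 < q := hq ▸ pow_pos hp.pos _
  obtain ⟨y, hy⟩ := hb
  generalize ((b : Matrix (Fin n) (Fin n) (LaurentSeries K)).det).order = d at hy ⊢
  have key : ∀ x : GL (Fin n) (LaurentSeries K),
      (((y * x)⁻¹ * b * Units.map (RingHom.mapMatrix σL).toMonoidHom (y * x) :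
        GL (Fin n) (LaurentSeries K)) : Matrix (Fin n) (Fin n) (LaurentSeries K)) =
      (x⁻¹).1 * basicRep K n d * x.1.map σL := by
    intro x
    rw [← hy, map_mul, _root_.mul_inv_rev]
    simp only [Units.val_mul, mul_assoc]
    rfl
  constructor
  · intro h
    by_contra hd
    obtain ⟨x, S, hS, hS', hx⟩ := exists_conj_basicRep_blockDiagonal p m hp hq hm hσL n d hd
    exact h ⟨y * x, S, hS, hS', fun i j hij => by rw [key]; exact hx i j hij⟩
  · rintro hd ⟨g, S, hS, hS', hg⟩
    have hdvd : (n : ℤ) ∣ S.card * d := by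
      refine dvd_card_mul_of_conj_basicRep hq0 hσL d (y⁻¹ * g) S fun i j hi hj => ?_
      rw [← key, mul_inv_cancel_left]
      exact hg i j (Or.inr ⟨hj, hi⟩)
    have hcard : n ∣ S.card := by
      have := Int.dvd_of_dvd_mul_left_of_gcd_one hdvd (by rwa [Int.gcd_comm])
      exact_mod_cast this
    have hlt := Finset.card_lt_card (Finset.ssubset_univ_iff.2 hS')
    rw [Finset.card_univ, Fintype.card_fin] at hlt
    exact absurd (Nat.le_of_dvd hS.card_pos hcard) (by omega)
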